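/- arXiv:2506.05479 — 7 statements merged into one kernel-verified Lean document; each statement's English description precedes it below -/
import Mathlib

section
/- Let x_1,…,x_T be the distributions produced by the HEDGE algorithm with learning rate η on the loss sequence g_1,…,g_T. Then for every probability vector x* ∈ Δ^ℓ, the total loss of HEDGE satisfies ∑_{t=1}^T ⟨g_t, x_t⟩ ≤ (η·∑_{t=1}^T ⟨g_t, x*⟩ + ln ℓ) / (1 − exp(−η)). -/
/-!
The proof tracks the potential `W n = ∑ i, exp (-η * ∑_{s ≤ n} g s i)`, the total weight after
`n` rounds, with `c = 1 - exp (-η)`. By convexity of `exp`, `exp (-η a) ≤ 1 - c a` on `[0, 1]`,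
so one round multiplies `W` by at most `1 - c ⟨g t, x t⟩ ≤ exp (-c ⟨g t, x t⟩)`; hence
`W T ≤ ℓ * exp (-c * total loss)`. On the other hand `W T` is at least the weight
`exp (-η * ∑ t, g t i)` of each single coordinate. Comparing logarithms bounds the total loss
against every coordinate `i`, and averaging over `i` with weights `xs i` gives the claim.
-/

/-- The chord bound for the convex function `a ↦ exp (-η a)` on `[0, 1]`. -/
lemma exp_neg_mul_le_chord (η a : ℝ) (h0 : 0 ≤ a) (h1 : a ≤ 1) :
    Real.exp (-η * a) ≤ 1 - (1 - Real.exp (-η)) * a := by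
  have h := convexOn_exp.2 (Set.mem_univ (0 : ℝ)) (Set.mem_univ (-η))
    (sub_nonneg.2 h1) h0 (sub_add_cancel 1 a)
  simp only [smul_eq_mul, mul_zero, zero_add, Real.exp_zero, mul_one] at h
  rw [mul_comm (-η) a]
  linarith

/-- One round of multiplicative updates shrinks the total weight by a factor exponential in the
expected loss under the normalized weights. -/
lemma sum_mul_exp_le {ι : Type*} [Fintype ι] [Nonempty ι] (η : ℝ) (v a : ι → ℝ)
    (hv : ∀ i, 0 < v i) (ha : ∀ i, a i ∈ Set.Icc (0 : ℝ) 1) :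
    ∑ i, v i * Real.exp (-η * a i) ≤
      (∑ i, v i) * Real.exp (-(1 - Real.exp (-η)) * ∑ i, a i * (v i / ∑ j, v j)) := by
  have hW : 0 < ∑ i, v i := Finset.sum_pos (fun i _ => hv i) Finset.univ_nonempty
  set c := 1 - Real.exp (-η) with hc
  have hloss : (∑ i, v i) * ∑ i, a i * (v i / ∑ j, v j) = ∑ i, a i * v i := by
    rw [Finset.mul_sum]
    refine Finset.sum_congr rfl fun i _ => ?_
    field_simp
  calc ∑ i, v i * Real.exp (-η * a i)
      ≤ ∑ i, v i * (1 - c * a i) := Finset.sum_le_sum fun i _ =>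
        mul_le_mul_of_nonneg_left (exp_neg_mul_le_chord η _ (ha i).1 (ha i).2) (hv i).le
    _ = (∑ i, v i) - c * ∑ i, a i * v i := by
        rw [Finset.mul_sum, ← Finset.sum_sub_distrib]
        exact Finset.sum_congr rfl fun i _ => by ring
    _ = (∑ i, v i) * (-c * (∑ i, a i * (v i / ∑ j, v j)) + 1) := by
        rw [← hloss]; ring
    _ ≤ _ := mul_le_mul_of_nonneg_left (Real.add_one_le_exp _) hW.le


/-- **HEDGE regret bound (small losses).**
Fix `ℓ ≥ 1`, `T ≥ 1`, a learning rate `η > 0`, and loss vectors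
`g 1, …, g T ∈ [0,1]^ℓ`.  HEDGE produces the distributions
`x t i = w t i / ∑ j, w t j` with `w t i = exp (−η · ∑_{s=1}^{t−1} g s i)`.
Then for every probability vector `x* ∈ Δ^ℓ`,
`∑_{t=1}^T ⟨g t, x t⟩ ≤ (η · ∑_{t=1}^T ⟨g t, x*⟩ + log ℓ) / (1 − exp (−η))`. -/
theorem hedge_regret_small_losses
    (ℓ T : ℕ) (hℓ : 1 ≤ ℓ) (hT : 1 ≤ T)
    (η : ℝ) (hη : 0 < η)
    (g : ℕ → Fin ℓ → ℝ)
    (hg : ∀ t ∈ Finset.Icc 1 T, ∀ i, g t i ∈ Set.Icc (0 : ℝ) 1)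
    (w x : ℕ → Fin ℓ → ℝ)
    (hw : ∀ t ∈ Finset.Icc 1 T, ∀ i,
      w t i = Real.exp (-η * ∑ s ∈ Finset.Icc 1 (t - 1), g s i))
    (hx : ∀ t ∈ Finset.Icc 1 T, ∀ i, x t i = w t i / ∑ j, w t j)
    (xs : Fin ℓ → ℝ) (hxs0 : ∀ i, 0 ≤ xs i) (hxs1 : ∑ i, xs i = 1) :
    ∑ t ∈ Finset.Icc 1 T, ∑ i, g t i * x t i ≤
      (η * ∑ t ∈ Finset.Icc 1 T, ∑ i, g t i * xs i + Real.log ℓ)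
        / (1 - Real.exp (-η)) := by
  have : Nonempty (Fin ℓ) := ⟨⟨0, hℓ⟩⟩
  have hc : 0 < 1 - Real.exp (-η) := sub_pos.2 (Real.exp_lt_one_iff.2 (neg_lt_zero.2 hη))
  have hpot : ∀ n ≤ T, ∑ i, Real.exp (-η * ∑ s ∈ Finset.Icc 1 n, g s i) ≤
      ℓ * Real.exp (-(1 - Real.exp (-η)) *
        ∑ t ∈ Finset.Icc 1 n, ∑ i, g t i * x t i) := by
    intro n
    induction n with
    | zero => intro _; simp
    | succ n ih =>
      intro hn
      have hmem : n + 1 ∈ Finset.Icc 1 T := Finset.mem_Icc.2 ⟨by omega, hn⟩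
      have hstep := sum_mul_exp_le η
        (fun i => Real.exp (-η * ∑ s ∈ Finset.Icc 1 n, g s i)) (g (n + 1))
        (fun i => Real.exp_pos _) (hg _ hmem)
      have hxn : ∀ i, x (n + 1) i = Real.exp (-η * ∑ s ∈ Finset.Icc 1 n, g s i) /
          ∑ j, Real.exp (-η * ∑ s ∈ Finset.Icc 1 n, g s j) := by
        intro i
        simp only [hx _ hmem, hw _ hmem, Nat.add_sub_cancel]
      simp only [← hxn] at hstep
      simp only [Finset.sum_Icc_succ_top (Nat.le_add_left 1 n), mul_add, Real.exp_add]
      refine hstep.trans ?_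
      rw [← mul_assoc]
      exact mul_le_mul_of_nonneg_right (ih (by omega)) (Real.exp_pos _).le
  have hcoord : ∀ i, (1 - Real.exp (-η)) * ∑ t ∈ Finset.Icc 1 T, ∑ i, g t i * x t i ≤
      η * (∑ t ∈ Finset.Icc 1 T, g t i) + Real.log ℓ := by
    intro i
    have h := (Finset.single_le_sum
      (f := fun i => Real.exp (-η * ∑ s ∈ Finset.Icc 1 T, g s i))
      (fun j _ => (Real.exp_pos _).le) (Finset.mem_univ i)).trans (hpot T le_rfl)
    have hℓ0 : (0 : ℝ) < ℓ := by exact_mod_cast hℓ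
    have hlog := Real.log_le_log (Real.exp_pos _) h
    rw [Real.log_exp, Real.log_mul hℓ0.ne' (Real.exp_pos _).ne', Real.log_exp] at hlog
    linarith
  rw [le_div_iff₀ hc, mul_comm]
  have havg := Finset.sum_le_sum fun i (_ : i ∈ Finset.univ) =>
    mul_le_mul_of_nonneg_left (hcoord i) (hxs0 i)
  rw [← Finset.sum_mul, hxs1, one_mul] at havg
  refine havg.trans_eq ?_
  simp only [mul_add, Finset.sum_add_distrib]
  rw [← Finset.sum_mul, hxs1, one_mul, Finset.sum_comm, Finset.mul_sum]
  congr 1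
  refine Finset.sum_congr rfl fun i _ => ?_
  rw [← Finset.sum_mul]
  ring
end

section
/- Let x_1,…,x_T be the distributions produced by the HEDGE algorithm with learning rate η on the loss sequence g_1,…,g_T. Then HEDGE is stable: for every t ∈ {2,…,T}, ∑_{i=1}^ℓ max(0, x_{t−1}(i) − x_t(i)) ≤ η·⟨g_{t−1}, x_{t−1}⟩; equivalently, (1/2)·‖x_{t−1} − x_t‖_1 ≤ η·⟨g_{t−1}, x_{t−1}⟩. -/
/-!
Passing from round `t - 1` to round `t` multiplies the weight of `i` by `exp (-η * g (t-1) i) ≤ 1`,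
so the normalizing constant does not increase and
`x t i ≥ x (t-1) i * exp (-η * g (t-1) i) ≥ x (t-1) i * (1 - η * g (t-1) i)`.
Hence every positive part `max 0 (x (t-1) i - x t i)` is at most `η * g (t-1) i * x (t-1) i`, and
summing over `i` gives the first bound. The second bound is the same one, because both vectors sum
to one and half the `ℓ1` distance of such vectors is the sum of the positive parts of the
differences.
-/

/-- **Stability of HEDGE.**
With `x t i = w t i / ∑ j, w t j`, `w t i = exp (−η · ∑_{s=1}^{t−1} g s i)`,
for every `t ∈ {2,…,T}` we have
`∑ i, max 0 (x (t−1) i − x t i) ≤ η · ⟨g (t−1), x (t−1)⟩`, equivalently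
`(1/2) · ‖x (t−1) − x t‖₁ ≤ η · ⟨g (t−1), x (t−1)⟩`. -/
theorem hedge_stability
    (ℓ T : ℕ) (hℓ : 1 ≤ ℓ) (hT : 1 ≤ T)
    (η : ℝ) (hη : 0 < η)
    (g : ℕ → Fin ℓ → ℝ)
    (hg : ∀ t ∈ Finset.Icc 1 T, ∀ i, g t i ∈ Set.Icc (0 : ℝ) 1)
    (w x : ℕ → Fin ℓ → ℝ)
    (hw : ∀ t ∈ Finset.Icc 1 T, ∀ i,
      w t i = Real.exp (-η * ∑ s ∈ Finset.Icc 1 (t - 1), g s i))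
    (hx : ∀ t ∈ Finset.Icc 1 T, ∀ i, x t i = w t i / ∑ j, w t j)
    (t : ℕ) (ht : 2 ≤ t) (htT : t ≤ T) :
    (∑ i, max 0 (x (t - 1) i - x t i) ≤ η * ∑ i, g (t - 1) i * x (t - 1) i)
    ∧ ((1 / 2) * ∑ i, |x (t - 1) i - x t i| ≤
        η * ∑ i, g (t - 1) i * x (t - 1) i) := by
  obtain ⟨n, rfl⟩ : ∃ n, t = n + 1 := ⟨t - 1, by omega⟩
  simp only [Nat.add_sub_cancel]
  have hn : n ∈ Finset.Icc 1 T := Finset.mem_Icc.2 ⟨by omega, by omega⟩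
  have hn1 : n + 1 ∈ Finset.Icc 1 T := Finset.mem_Icc.2 ⟨by omega, htT⟩
  have : Nonempty (Fin ℓ) := ⟨⟨0, hℓ⟩⟩
  have hpos : ∀ s ∈ Finset.Icc 1 T, ∀ i, 0 < w s i := fun s hs i => by
    rw [hw s hs i]; exact Real.exp_pos _
  have hWpos : ∀ s ∈ Finset.Icc 1 T, 0 < ∑ j, w s j := fun s hs =>
    Finset.sum_pos (fun i _ => hpos s hs i) Finset.univ_nonempty
  have hsum : ∀ s ∈ Finset.Icc 1 T, ∑ i, x s i = 1 := fun s hs => by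
    rw [Finset.sum_congr rfl (fun i _ => hx s hs i), ← Finset.sum_div]
    exact div_self (hWpos s hs).ne'
  have hstep : ∀ i, w (n + 1) i = w n i * Real.exp (-η * g n i) := fun i => by
    have hsplit : ∑ s ∈ Finset.Icc 1 n, g s i
        = ∑ s ∈ Finset.Icc 1 (n - 1), g s i + g n i := by
      obtain ⟨m, rfl⟩ : ∃ m, n = m + 1 := ⟨n - 1, by omega⟩
      exact Finset.sum_Icc_succ_top (by omega) _
    rw [hw _ hn1, hw _ hn, ← Real.exp_add, Nat.add_sub_cancel, hsplit, mul_add]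
  have hWle : ∑ j, w (n + 1) j ≤ ∑ j, w n j := Finset.sum_le_sum fun j _ => by
    rw [hstep]
    refine mul_le_of_le_one_right (hpos n hn j).le (Real.exp_le_one_iff.2 ?_)
    nlinarith [mul_nonneg hη.le (hg n hn j).1]
  have hxnonneg : ∀ i, 0 ≤ x n i := fun i => by
    rw [hx n hn]; exact div_nonneg (hpos n hn i).le (hWpos n hn).le
  have hlower : ∀ i, x n i * (1 - η * g n i) ≤ x (n + 1) i := fun i =>
    calc x n i * (1 - η * g n i) ≤ x n i * Real.exp (-η * g n i) :=
          mul_le_mul_of_nonneg_left (by linarith [Real.add_one_le_exp (-η * g n i)]) (hxnonneg i)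
      _ = w (n + 1) i / ∑ j, w n j := by rw [hstep, hx n hn]; ring
      _ ≤ w (n + 1) i / ∑ j, w (n + 1) j :=
          div_le_div_of_nonneg_left (hpos _ hn1 i).le (hWpos _ hn1) hWle
      _ = x (n + 1) i := (hx _ hn1 i).symm
  have hmain : ∑ i, max 0 (x n i - x (n + 1) i) ≤ η * ∑ i, g n i * x n i := by
    rw [Finset.mul_sum]
    refine Finset.sum_le_sum fun i _ => max_le ?_ ?_
    · exact mul_nonneg hη.le (mul_nonneg (hg n hn i).1 (hxnonneg i))
    · linarith [hlower i]
  have habs : ∑ i, |x n i - x (n + 1) i| = 2 * ∑ i, max 0 (x n i - x (n + 1) i) := by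
    have hpt : ∀ a : ℝ, |a| = 2 * max 0 a - a := fun a => by
      rcases le_total 0 a with h | h
      · rw [abs_of_nonneg h, max_eq_right h]; ring
      · rw [abs_of_nonpos h, max_eq_left h]; ring
    rw [Finset.sum_congr rfl (fun i _ => hpt _), Finset.sum_sub_distrib, ← Finset.mul_sum,
      Finset.sum_sub_distrib, hsum _ hn, hsum _ hn1]
    ring
  exact ⟨hmain, by linarith⟩
end

section
/- Let x_1,…,x_T be the distributions produced by the SHARE algorithm. Then for every t ∈ {2,…,T}, ∑_{i : x_t(i) < x_{t−1}(i)} (x_{t−1}(i) − x_t(i)) ≤ ∑_{i : x_t(i) < x_{t−1}(i)} x_{t−1}(i)·(1 − exp(−η·g_{t−1}(i))). -/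
/-!
The inequality holds term by term, for every coordinate `i` and not only for the decreasing ones.
All weights are positive and the shared mass `Δ` is nonnegative, so a round multiplies the weight
of `i` by at least `exp (-η g i)`. The total weight drops by `Δ` and gets back only `α Δ ≤ Δ`, so
it does not increase. Dividing, `x (s+1) i ≥ x s i * exp (-η g s i)`, which rearranges to
`x s i - x (s+1) i ≤ x s i * (1 - exp (-η g s i))`.
-/

/-- The mass `Δ` collected for sharing is nonnegative when the weights and losses are. -/
lemma share_mass_nonneg {ℓ : ℕ} {η : ℝ} (hη : 0 < η) {u c : Fin ℓ → ℝ}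
    (hu : ∀ i, 0 < u i) (hc : ∀ i, 0 ≤ c i) :
    0 ≤ ∑ j, u j * (1 - Real.exp (-η * c j)) := by
  refine Finset.sum_nonneg fun j _ => mul_nonneg (hu j).le (sub_nonneg.2 ?_)
  rw [Real.exp_le_one_iff]
  nlinarith [mul_nonneg hη.le (hc j)]

/-- One round of SHARE, from weights `u` to weights `v` with losses `c`: the normalised weight of
each coordinate shrinks by a factor of at least `exp (-η * c i)`. -/
lemma share_step {ℓ : ℕ} (hℓ : 1 ≤ ℓ) {η α : ℝ} (hη : 0 < η) (hα : α ∈ Set.Ioo (0 : ℝ) 1)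
    {u v c : Fin ℓ → ℝ} (hu : ∀ i, 0 < u i) (hv : ∀ i, 0 < v i) (hc : ∀ i, 0 ≤ c i)
    (h : ∀ i, v i = u i * Real.exp (-η * c i)
      + α * (∑ j, u j * (1 - Real.exp (-η * c j))) / ℓ) (i : Fin ℓ) :
    u i / (∑ j, u j) * Real.exp (-η * c i) ≤ v i / ∑ j, v j := by
  have hΔ := share_mass_nonneg hη hu hc
  have hℓ0 : (ℓ : ℝ) ≠ 0 := by positivity
  have hsum : ∑ j, v j ≤ ∑ j, u j := by
    have e : ∑ j, v j = ∑ j, u j - (1 - α) * ∑ j, u j * (1 - Real.exp (-η * c j)) := by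
      rw [Finset.sum_congr rfl fun j _ => h j, Finset.sum_add_distrib, Finset.sum_const,
        Finset.card_univ, Fintype.card_fin, nsmul_eq_mul, mul_div_cancel₀ _ hℓ0]
      simp only [mul_sub, mul_one, Finset.sum_sub_distrib]
      ring
    rw [e]
    nlinarith [mul_nonneg (sub_nonneg.2 hα.2.le) hΔ]
  have hV : 0 < ∑ j, v j := Finset.sum_pos (fun j _ => hv j) ⟨i, Finset.mem_univ i⟩
  have hle : u i * Real.exp (-η * c i) ≤ v i := by
    rw [h i]
    exact le_add_of_nonneg_right (div_nonneg (mul_nonneg hα.1.le hΔ) (Nat.cast_nonneg ℓ))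
  rw [div_mul_eq_mul_div]
  exact div_le_div₀ (hv i).le hle hV hsum


/-- **SHARE weight lemma.**
SHARE with learning rate `η` and sharing parameter `α` has weights
`w 1 i = 1`, `w (t+1) i = w t i · exp (−η · g t i) + α · Δ t / ℓ` where
`Δ t = ∑ j, w t j · (1 − exp (−η · g t j))`, and plays
`x t i = w t i / ∑ j, w t j`.  For every `t ∈ {2,…,T}`,
`∑_{i : x t i < x (t−1) i} (x (t−1) i − x t i)
  ≤ ∑_{i : x t i < x (t−1) i} x (t−1) i · (1 − exp (−η · g (t−1) i))`. -/
theorem share_weight_lemma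
    (ℓ T : ℕ) (hℓ : 1 ≤ ℓ) (hT : 1 ≤ T)
    (η α : ℝ) (hη : 0 < η) (hα : α ∈ Set.Ioo (0 : ℝ) 1)
    (g : ℕ → Fin ℓ → ℝ)
    (hg : ∀ t ∈ Finset.Icc 1 T, ∀ i, g t i ∈ Set.Icc (0 : ℝ) 1)
    (w x : ℕ → Fin ℓ → ℝ)
    (hw1 : ∀ i, w 1 i = 1)
    (hw : ∀ t ∈ Finset.Icc 1 T, ∀ i,
      w (t + 1) i = w t i * Real.exp (-η * g t i)
        + α * (∑ j, w t j * (1 - Real.exp (-η * g t j))) / ℓ)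
    (hx : ∀ t ∈ Finset.Icc 1 T, ∀ i, x t i = w t i / ∑ j, w t j)
    (t : ℕ) (ht : 2 ≤ t) (htT : t ≤ T) :
    ∑ i ∈ Finset.univ.filter (fun i => x t i < x (t - 1) i),
        (x (t - 1) i - x t i) ≤
      ∑ i ∈ Finset.univ.filter (fun i => x t i < x (t - 1) i),
        x (t - 1) i * (1 - Real.exp (-η * g (t - 1) i)) := by
  have hpos : ∀ s, 1 ≤ s → s ≤ T → ∀ i, 0 < w s i := by
    intro s hs
    induction s, hs using Nat.le_induction with
    | base => intro _ i; simp [hw1 i]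
    | succ s hs ih =>
      intro hsT i
      have hmem : s ∈ Finset.Icc 1 T := Finset.mem_Icc.2 ⟨hs, by omega⟩
      have hu := ih (by omega)
      rw [hw s hmem i]
      exact add_pos_of_pos_of_nonneg (mul_pos (hu i) (Real.exp_pos _))
        (div_nonneg (mul_nonneg hα.1.le
          (share_mass_nonneg hη hu fun j => (hg s hmem j).1)) (Nat.cast_nonneg ℓ))
  obtain ⟨s, rfl⟩ : ∃ s, t = s + 1 := ⟨t - 1, by omega⟩
  rw [Nat.add_sub_cancel]
  have hmem : s ∈ Finset.Icc 1 T := Finset.mem_Icc.2 ⟨by omega, by omega⟩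
  refine Finset.sum_le_sum fun i _ => ?_
  have key := share_step hℓ hη hα (hpos s (by omega) (by omega)) (hpos (s + 1) (by omega) htT)
    (fun j => (hg s hmem j).1) (hw s hmem) i
  rw [← hx s hmem i, ← hx (s + 1) (Finset.mem_Icc.2 ⟨by omega, htT⟩) i] at key
  linarith
end

section
/- Let x_1,…,x_T be the distributions produced by the SHARE algorithm. Then SHARE is stable: for every t ∈ {2,…,T}, ∑_{i=1}^ℓ max(0, x_{t−1}(i) − x_t(i)) ≤ η·⟨g_{t−1}, x_{t−1}⟩. -/
/-!
One update never increases the total weight: `∑ w' = ∑ w - (1 - α) Δ` with `Δ ≥ 0`. Each single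
weight satisfies `w' i ≥ w i · exp (-η g i) ≥ w i · (1 - η g i)`, because the shared mass is
nonnegative. Hence `x' i = w' i / ∑ w' ≥ w' i / ∑ w ≥ x i · (1 - η g i)`, that is,
`x i - x' i ≤ η g i x i`. The right-hand side is nonnegative, so it also bounds the positive part,
and summing over `i` gives the claim.
-/

/-- The mass `Δ` removed by the exponential update is nonnegative. -/
lemma share_delta_nonneg {ℓ : ℕ} {η : ℝ} (hη : 0 < η) {g w : Fin ℓ → ℝ}
    (hg : ∀ i, 0 ≤ g i) (hw : ∀ i, 0 < w i) :
    0 ≤ ∑ j, w j * (1 - Real.exp (-η * g j)) := by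
  refine Finset.sum_nonneg fun j _ => mul_nonneg (hw j).le (sub_nonneg.2 ?_)
  exact Real.exp_le_one_iff.2 (by nlinarith [hg j])

lemma share_step_pos {ℓ : ℕ} {η α : ℝ} (hη : 0 < η) (hα : 0 < α) {g w w' : Fin ℓ → ℝ}
    (hg : ∀ i, 0 ≤ g i) (hw : ∀ i, 0 < w i)
    (hw' : ∀ i, w' i = w i * Real.exp (-η * g i)
      + α * (∑ j, w j * (1 - Real.exp (-η * g j))) / ℓ) (i : Fin ℓ) : 0 < w' i := by
  have hΔ := share_delta_nonneg hη hg hw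
  have := hw i
  rw [hw' i]
  positivity

lemma share_step_sum_le {ℓ : ℕ} (hℓ : 1 ≤ ℓ) {η α : ℝ} (hη : 0 < η) (hα : α < 1)
    {g w w' : Fin ℓ → ℝ} (hg : ∀ i, 0 ≤ g i) (hw : ∀ i, 0 < w i)
    (hw' : ∀ i, w' i = w i * Real.exp (-η * g i)
      + α * (∑ j, w j * (1 - Real.exp (-η * g j))) / ℓ) :
    ∑ i, w' i ≤ ∑ i, w i := by
  have hΔ := share_delta_nonneg hη hg hw
  have hℓ' : (ℓ : ℝ) ≠ 0 := by positivity
  have hsum : ∑ i, w' i = ∑ i, w i * Real.exp (-η * g i)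
      + α * ∑ j, w j * (1 - Real.exp (-η * g j)) := by
    simp only [hw', Finset.sum_add_distrib, Finset.sum_const, Finset.card_univ, Fintype.card_fin,
      nsmul_eq_mul]
    field_simp
  have hsplit : ∑ j, w j * (1 - Real.exp (-η * g j))
      = ∑ i, w i - ∑ i, w i * Real.exp (-η * g i) := by
    rw [← Finset.sum_sub_distrib]
    exact Finset.sum_congr rfl fun i _ => by ring
  nlinarith

/-- Per-coordinate stability: normalizing by the smaller total `∑ w'` only helps, so each
probability keeps at least the fraction `1 - η g i` of its old value. -/
lemma share_step_sub_le {ℓ : ℕ} (hℓ : 1 ≤ ℓ) {η α : ℝ} (hη : 0 < η) (hα : α ∈ Set.Ioo (0 : ℝ) 1)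
    {g w w' : Fin ℓ → ℝ} (hg : ∀ i, 0 ≤ g i) (hw : ∀ i, 0 < w i)
    (hw' : ∀ i, w' i = w i * Real.exp (-η * g i)
      + α * (∑ j, w j * (1 - Real.exp (-η * g j))) / ℓ) (i : Fin ℓ) :
    w i / ∑ j, w j - w' i / ∑ j, w' j ≤ η * (g i * (w i / ∑ j, w j)) := by
  have hpos' := share_step_pos hη hα.1 hg hw hw'
  have hW : 0 < ∑ j, w j := Finset.sum_pos (fun j _ => hw j) ⟨i, Finset.mem_univ i⟩
  have hW' : 0 < ∑ j, w' j := Finset.sum_pos (fun j _ => hpos' j) ⟨i, Finset.mem_univ i⟩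
  have hdiv : w' i / ∑ j, w j ≤ w' i / ∑ j, w' j :=
    div_le_div_of_nonneg_left (hpos' i).le hW' (share_step_sum_le hℓ hη hα.2 hg hw hw')
  have hlow : w i * (1 - η * g i) ≤ w' i := by
    have hΔ := share_delta_nonneg hη hg hw
    have hshare : 0 ≤ α * (∑ j, w j * (1 - Real.exp (-η * g j))) / ℓ :=
      div_nonneg (mul_nonneg hα.1.le hΔ) (Nat.cast_nonneg ℓ)
    have hexp : w i * (1 - η * g i) ≤ w i * Real.exp (-η * g i) :=
      mul_le_mul_of_nonneg_left (by linarith [Real.add_one_le_exp (-η * g i)]) (hw i).le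
    rw [hw' i]
    linarith
  have hlow' := div_le_div_of_nonneg_right hlow hW.le
  have hring : w i * (1 - η * g i) / ∑ j, w j
      = w i / ∑ j, w j - η * (g i * (w i / ∑ j, w j)) := by ring
  linarith


/-- **Stability of SHARE.**
SHARE with learning rate `η` and sharing parameter `α` has weights
`w 1 i = 1`, `w (t+1) i = w t i · exp (−η · g t i) + α · Δ t / ℓ` where
`Δ t = ∑ j, w t j · (1 − exp (−η · g t j))`, and plays
`x t i = w t i / ∑ j, w t j`.  For every `t ∈ {2,…,T}`,
`∑ i, max 0 (x (t−1) i − x t i) ≤ η · ⟨g (t−1), x (t−1)⟩`. -/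
theorem share_stability
    (ℓ T : ℕ) (hℓ : 1 ≤ ℓ) (hT : 1 ≤ T)
    (η α : ℝ) (hη : 0 < η) (hα : α ∈ Set.Ioo (0 : ℝ) 1)
    (g : ℕ → Fin ℓ → ℝ)
    (hg : ∀ t ∈ Finset.Icc 1 T, ∀ i, g t i ∈ Set.Icc (0 : ℝ) 1)
    (w x : ℕ → Fin ℓ → ℝ)
    (hw1 : ∀ i, w 1 i = 1)
    (hw : ∀ t ∈ Finset.Icc 1 T, ∀ i,
      w (t + 1) i = w t i * Real.exp (-η * g t i)
        + α * (∑ j, w t j * (1 - Real.exp (-η * g t j))) / ℓ)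
    (hx : ∀ t ∈ Finset.Icc 1 T, ∀ i, x t i = w t i / ∑ j, w t j)
    (t : ℕ) (ht : 2 ≤ t) (htT : t ≤ T) :
    ∑ i, max 0 (x (t - 1) i - x t i) ≤
      η * ∑ i, g (t - 1) i * x (t - 1) i := by
  obtain ⟨s, rfl⟩ : ∃ s, t = s + 1 := ⟨t - 1, by omega⟩
  have hpos : ∀ n, 1 ≤ n → n ≤ T → ∀ i, 0 < w n i := by
    intro n hn
    induction n, hn using Nat.le_induction with
    | base => intro _ i; simp [hw1]
    | succ n hn ih =>
      intro hnT
      have hmem : n ∈ Finset.Icc 1 T := Finset.mem_Icc.2 ⟨hn, by omega⟩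
      exact share_step_pos hη hα.1 (fun i => (hg n hmem i).1) (ih (by omega)) (hw n hmem)
  have hs : s ∈ Finset.Icc 1 T := Finset.mem_Icc.2 ⟨by omega, by omega⟩
  have hs' : s + 1 ∈ Finset.Icc 1 T := Finset.mem_Icc.2 ⟨by omega, htT⟩
  have hws := hpos s (by omega) (by omega)
  have hgs : ∀ i, 0 ≤ g s i := fun i => (hg s hs i).1
  rw [Nat.add_sub_cancel, Finset.mul_sum]
  refine Finset.sum_le_sum fun i _ => ?_
  rw [hx s hs, hx (s + 1) hs']
  refine max_le ?_ (share_step_sub_le hℓ hη hα hgs hws (hw s hs) i)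
  exact mul_nonneg hη.le (mul_nonneg (hgs i)
    (div_nonneg (hws i).le (Finset.sum_nonneg fun j _ => (hws j).le)))
end

section
/- There exists a probability measure μ on M^{T+1} such that, for a random sequence (s_0,…,s_T) distributed according to μ, the marginal distribution of s_t equals p_t for every t ∈ {0,…,T}, and the expected total cost satisfies E[∑_{t=1}^T (c_t(s_t) + d(s_{t−1}, s_t))] = ∑_{t=1}^T (∑_{s∈M} c_t(s)·p_t(s) + ∑_{i,j∈M} τ_t(i,j)·d(i,j)). In particular, a fractional MTS solution can be rounded online to a randomized solution whose expected cost equals the fractional service cost plus the transport (earth mover) movement cost. -/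
/-!
The measure is the law of a Markov chain whose consecutive pairs `(s (t-1), s t)` have law `τ t`.
It is built by induction on `T`, adding one state in front of a chain for the plans after the first:
conditionally on the next state `j`, the new state `i` is drawn with probability `K i j`, where
`K` disintegrates the first plan along its second marginal (`exists_transport_kernel`). The
resulting weights integrate functions of `s t` against `p t` and functions of `(s (t-1), s t)`
against `τ t` (`exists_chain_weights`). The first fact gives the marginals and the service cost,
and the second, applied to `dist`, gives the movement cost.
-/

open scoped BigOperators

/-- Disintegration of a plan along its second marginal `q`. Columns of zero mass, where the
quotient `σ i j / q j` is meaningless, are given a point mass, so that every column of `K` is a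
probability distribution. -/
lemma exists_transport_kernel {M : Type*} [Fintype M] [DecidableEq M] [Nonempty M]
    (q : M → ℝ) (σ : M → M → ℝ) (hσ0 : ∀ i j, 0 ≤ σ i j) (hσ : ∀ j, ∑ i, σ i j = q j) :
    ∃ K : M → M → ℝ, (∀ i j, 0 ≤ K i j) ∧ (∀ j, ∑ i, K i j = 1) ∧
      ∀ i j, q j * K i j = σ i j := by
  obtain ⟨a⟩ := ‹Nonempty M›
  have hq : ∀ j, 0 ≤ q j := fun j => hσ j ▸ Finset.sum_nonneg fun i _ => hσ0 i j
  refine ⟨fun i j => if q j = 0 then (if i = a then 1 else 0) else σ i j / q j, ?_, ?_, ?_⟩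
  · intro i j
    dsimp only
    split_ifs
    · exact zero_le_one
    · exact le_rfl
    · exact div_nonneg (hσ0 i j) (hq j)
  · intro j
    by_cases h : q j = 0
    · simp [h]
    · simp [h, ← Finset.sum_div, hσ j]
  · intro i j
    by_cases h : q j = 0
    · have := (Finset.sum_eq_zero_iff_of_nonneg fun i _ => hσ0 i j).1 ((hσ j).trans h)
      simp [h, this i (Finset.mem_univ i)]
    · simp only [h, if_false]
      field_simp

/-- A chain of plans is realised by nonnegative weights on paths, whose one-time marginals are the
`p t` and whose consecutive two-time marginals are the `τ t`; both are expressed by integrating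
test functions. -/
lemma exists_chain_weights {M : Type*} [Fintype M] [DecidableEq M] [Nonempty M] (T : ℕ)
    (p : Fin (T + 1) → M → ℝ) (hp0 : ∀ t s, 0 ≤ p t s)
    (τ : Fin T → M → M → ℝ) (hτ0 : ∀ t i j, 0 ≤ τ t i j)
    (hτleft : ∀ t i, ∑ j, τ t i j = p t.castSucc i)
    (hτright : ∀ t j, ∑ i, τ t i j = p t.succ j) :
    ∃ w : (Fin (T + 1) → M) → ℝ, (∀ ω, 0 ≤ w ω) ∧
      (∀ t (f : M → ℝ), ∑ ω, w ω * f (ω t) = ∑ s, p t s * f s) ∧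
      ∀ t (g : M → M → ℝ),
        ∑ ω, w ω * g (ω (Fin.castSucc t)) (ω (Fin.succ t)) = ∑ i, ∑ j, τ t i j * g i j := by
  induction T with
  | zero =>
    refine ⟨fun ω => p 0 (ω 0), fun ω => hp0 0 _, fun t f => ?_, fun t => t.elim0⟩
    obtain rfl : t = 0 := Fin.fin_one_eq_zero t
    exact Fintype.sum_equiv (Equiv.funUnique (Fin 1) M) _ _ fun ω => rfl
  | succ n ih =>
    obtain ⟨w, hw0, hw1, hw2⟩ := ih (fun t => p t.succ) (fun t => hp0 t.succ)
      (fun t => τ t.succ) (fun t => hτ0 t.succ)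
      (fun t i => hτleft t.succ i) (fun t j => hτright t.succ j)
    obtain ⟨K, hK0, hK1, hK⟩ := exists_transport_kernel (p (Fin.succ 0)) (τ 0) (hτ0 0) (hτright 0)
    have hsum : ∀ F : (Fin (n + 2) → M) → ℝ,
        ∑ ω, F ω = ∑ ω' : Fin (n + 1) → M, ∑ a, F (Fin.cons a ω') := by
      intro F
      rw [← (Fin.consEquiv fun _ : Fin (n + 2) => M).sum_comp, Fintype.sum_prod_type_right]
      rfl
    -- Columns of `K` sum to one, so forgetting the new first state recovers the old weights.
    have htail : ∀ F : (Fin (n + 1) → M) → ℝ,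
        ∑ ω : Fin (n + 2) → M, (K (ω 0) (ω (Fin.succ 0)) * w (Fin.tail ω)) * F (Fin.tail ω)
          = ∑ ω', w ω' * F ω' := by
      intro F
      rw [hsum]
      refine Finset.sum_congr rfl fun ω' _ => ?_
      simp only [Fin.cons_zero, Fin.cons_succ, Fin.tail_cons]
      rw [← Finset.sum_mul, ← Finset.sum_mul, hK1, one_mul]
    have hfirst : ∀ g : M → M → ℝ,
        ∑ ω : Fin (n + 2) → M,
            (K (ω 0) (ω (Fin.succ 0)) * w (Fin.tail ω)) * g (ω 0) (ω (Fin.succ 0))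
          = ∑ i, ∑ j, τ 0 i j * g i j := by
      intro g
      rw [hsum]
      simp only [Fin.cons_zero, Fin.cons_succ, Fin.tail_cons]
      calc _ = ∑ ω' : Fin (n + 1) → M, w ω' * (fun j => ∑ a, K a j * g a j) (ω' 0) := by
            refine Finset.sum_congr rfl fun ω' _ => ?_
            simp only [Finset.mul_sum]
            exact Finset.sum_congr rfl fun a _ => by ring
        _ = ∑ j, ∑ i, τ 0 i j * g i j := by
            refine (hw1 0 fun j => ∑ a, K a j * g a j).trans ?_
            refine Finset.sum_congr rfl fun j _ => ?_
            simp only [Finset.mul_sum]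
            exact Finset.sum_congr rfl fun i _ => by rw [← mul_assoc, hK]
        _ = _ := Finset.sum_comm
    refine ⟨fun ω => K (ω 0) (ω (Fin.succ 0)) * w (Fin.tail ω),
      fun ω => mul_nonneg (hK0 _ _) (hw0 _), fun t f => ?_, fun t g => ?_⟩
    · cases t using Fin.cases with
      | zero =>
        refine (hfirst fun i _ => f i).trans (Finset.sum_congr rfl fun i _ => ?_)
        rw [← Finset.sum_mul, hτleft 0 i, Fin.castSucc_zero]
      | succ t => exact (htail fun ω' => f (ω' t)).trans (hw1 t f)
    · cases t using Fin.cases with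
      | zero => exact hfirst g
      | succ t => exact (htail fun ω' => g (ω' t.castSucc) (ω' t.succ)).trans (hw2 t g)

/-- **Online rounding of a fractional MTS solution.**
Let `(M, d)` be a finite metric space, `p 0, …, p T` probability distributions
on `M`, `c 1, …, c T` nonnegative cost functions and, for each `t`, `τ t` a
transport plan from `p (t−1)` to `p t`.  Then there is a probability measure
on sequences `(s 0, …, s T) ∈ M^{T+1}` whose `t`-th marginal is `p t` and whose
expected total cost `∑_{t=1}^T (c t (s t) + d (s (t−1)) (s t))` equals the
fractional service cost plus the transport movement cost,
`∑_{t=1}^T (∑_{s} c t s · p t s + ∑_{i,j} τ t i j · d i j)`. -/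
theorem mts_fractional_rounding
    (M : Type*) [MetricSpace M] [Fintype M] [DecidableEq M] [Nonempty M]
    (T : ℕ) (hT : 1 ≤ T)
    (p : Fin (T + 1) → M → ℝ)
    (hp0 : ∀ t s, 0 ≤ p t s) (hp1 : ∀ t, ∑ s, p t s = 1)
    (c : Fin T → M → ℝ) (hc : ∀ t s, 0 ≤ c t s)
    (τ : Fin T → M → M → ℝ) (hτ0 : ∀ t i j, 0 ≤ τ t i j)
    (hτleft : ∀ t i, ∑ j, τ t i j = p t.castSucc i)
    (hτright : ∀ t j, ∑ i, τ t i j = p t.succ j) :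
    ∃ μ : PMF (Fin (T + 1) → M),
      (∀ t (s : M), μ.map (fun ω => ω t) s = ENNReal.ofReal (p t s)) ∧
      (∑ ω : Fin (T + 1) → M, (μ ω).toReal *
          ∑ t : Fin T, (c t (ω t.succ) + dist (ω t.castSucc) (ω t.succ)))
        = ∑ t : Fin T,
            ((∑ s, c t s * p t.succ s) + ∑ i, ∑ j, τ t i j * dist i j) := by
  obtain ⟨w, hw0, hw1, hw2⟩ := exists_chain_weights T p hp0 τ hτ0 hτleft hτright
  have htot : ∑ ω, w ω = 1 := by simpa [hp1] using hw1 0 fun _ => 1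
  refine ⟨PMF.ofFintype (fun ω => ENNReal.ofReal (w ω)) ?_, fun t s => ?_, ?_⟩
  · rw [← ENNReal.ofReal_sum_of_nonneg fun ω _ => hw0 ω, htot, ENNReal.ofReal_one]
  · have h : ∑ ω, (if s = ω t then w ω else 0) = p t s := by
      simpa using hw1 t fun x => if s = x then 1 else 0
    have hnn : ∀ ω ∈ Finset.univ, 0 ≤ if s = ω t then w ω else 0 := fun ω _ => by
      split_ifs
      exacts [hw0 ω, le_rfl]
    rw [PMF.map_apply, tsum_fintype, ← h, ENNReal.ofReal_sum_of_nonneg hnn]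
    refine Finset.sum_congr rfl fun ω _ => ?_
    by_cases hs : s = ω t <;> simp [hs]
  · simp only [PMF.ofFintype_apply, ENNReal.toReal_ofReal (hw0 _), Finset.mul_sum]
    rw [Finset.sum_comm]
    refine Finset.sum_congr rfl fun t _ => ?_
    simp only [mul_add, Finset.sum_add_distrib]
    rw [hw1 t.succ (c t), hw2 t dist]
    simp only [mul_comm (c t _)]
end

section
/- There exists a probability measure on sequences (i_0, i_1, …, i_T) ∈ {1,…,ℓ}^{T+1} such that the marginal distribution of i_t equals x_t for every t ∈ {0,…,T}, and E[∑_{t=1}^T (c_t(s_t^{i_t}) + d(s_{t−1}^{i_{t−1}}, s_t^{i_t}))] ≤ ∑_{t=1}^T (⟨f_t, x_t⟩ + (D/2)·‖x_{t−1} − x_t‖_1). That is, a sequence of distributions over ℓ heuristics can be rounded online to a random sequence of followed heuristics whose expected MTS cost is at most the fractional cost plus D/2 times the total ℓ1-movement of the distributions. -/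
open scoped BigOperators

/-!
Let the followed heuristic be a Markov chain whose consecutive pairs are maximally coupled:
given distributions `p`, `q` on a finite set there is a coupling that puts mass
`½ ∑ |p i - q i|` off the diagonal (`exists_coupling_kernel`). Gluing such couplings gives a law on
paths with the prescribed marginals and `P(ω (t-1) ≠ ω t) ≤ ½ ‖x (t-1) - x t‖₁`
(`exists_path_weights`). By the triangle inequality through the previous state of the *new*
heuristic, the cost of step `t` is at most `f t (ω t) + D · 1[ω (t-1) ≠ ω t]`, and taking
expectations gives the bound.
-/

/-- Maximal coupling, disintegrated over its second marginal: a stochastic kernel `K` that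
transports `q` to `p` and moves mass at most `½ ∑ |p i - q i|`. With `m = min p q`, mass
`m j` stays at `j` and the excess `q j - m j` is redistributed proportionally to `p - m`. -/
lemma exists_coupling_kernel {ι : Type*} [Fintype ι] [DecidableEq ι] (p q : ι → ℝ)
    (hp : ∀ i, 0 ≤ p i) (hq : ∀ i, 0 ≤ q i) (hp1 : ∑ i, p i = 1) (hq1 : ∑ i, q i = 1) :
    ∃ K : ι → ι → ℝ, (∀ j i, 0 ≤ K j i) ∧ (∀ j, ∑ i, K j i = 1) ∧
      (∀ i, ∑ j, q j * K j i = p i) ∧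
      ∑ j, q j * ∑ i, K j i * (if i = j then 0 else 1) ≤ 1 / 2 * ∑ i, |p i - q i| := by
  set m : ι → ℝ := fun i => min (p i) (q i) with hm
  have hm0 : ∀ i, 0 ≤ m i := fun i => le_min (hp i) (hq i)
  have hmp : ∀ i, m i ≤ p i := fun i => min_le_left _ _
  have hmq : ∀ i, m i ≤ q i := fun i => min_le_right _ _
  set δ : ℝ := 1 - ∑ i, m i with hδ
  have hδp : ∑ i, (p i - m i) = δ := by rw [Finset.sum_sub_distrib, hp1]
  have hδq : ∑ i, (q i - m i) = δ := by rw [Finset.sum_sub_distrib, hq1]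
  have hδabs : δ = 1 / 2 * ∑ i, |p i - q i| := by
    have h : ∀ i, |p i - q i| = (p i - m i) + (q i - m i) := by
      intro i
      simp only [hm]
      rcases le_total (p i) (q i) with h | h
      · rw [abs_of_nonpos (by linarith), min_eq_left h]; ring
      · rw [abs_of_nonneg (by linarith), min_eq_right h]; ring
    simp_rw [h]
    rw [Finset.sum_add_distrib, hδp, hδq]; ring
  -- The target law of the moved mass; if `δ = 0` nothing moves and any distribution will do.
  obtain ⟨r, hr0, hr1, hr⟩ : ∃ r : ι → ℝ, (∀ i, 0 ≤ r i) ∧ ∑ i, r i = 1 ∧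
      ∀ i, δ * r i = p i - m i := by
    have hδ0 : 0 ≤ δ := hδp ▸ Finset.sum_nonneg fun i _ => sub_nonneg.2 (hmp i)
    rcases hδ0.eq_or_lt with h0 | h0
    · refine ⟨p, hp, hp1, fun i => ?_⟩
      rw [← h0] at hδp
      have := (Finset.sum_eq_zero_iff_of_nonneg fun i _ => sub_nonneg.2 (hmp i)).1 hδp i
        (Finset.mem_univ i)
      rw [this, ← h0, zero_mul]
    · refine ⟨fun i => (p i - m i) / δ, fun i => div_nonneg (sub_nonneg.2 (hmp i)) h0.le, ?_,
        fun i => mul_div_cancel₀ _ h0.ne'⟩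
      rw [← Finset.sum_div, hδp, div_self h0.ne']
  -- The probability `m j / q j` of staying at `j`; it is `0` where `q j = 0`, which is harmless.
  obtain ⟨a, ha0, ha1, ha⟩ : ∃ a : ι → ℝ, (∀ j, 0 ≤ a j) ∧ (∀ j, a j ≤ 1) ∧
      ∀ j, q j * a j = m j := by
    refine ⟨fun j => m j / q j, fun j => div_nonneg (hm0 j) (hq j),
      fun j => div_le_one_of_le₀ (hmq j) (hq j), fun j => ?_⟩
    rcases eq_or_ne (q j) 0 with h | h
    · have := hm0 j
      have := hmq j
      simp only [h, zero_mul]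
      linarith
    · exact mul_div_cancel₀ _ h
  have hqa : ∀ j, q j * (1 - a j) = q j - m j := fun j => by rw [mul_sub, ha, mul_one]
  refine ⟨fun j i => (if i = j then a j else 0) + (1 - a j) * r i, ?_, ?_, ?_, ?_⟩
  · intro j i
    have := mul_nonneg (sub_nonneg.2 (ha1 j)) (hr0 i)
    have := ha0 j
    dsimp only
    split_ifs <;> linarith
  · intro j
    rw [Finset.sum_add_distrib, ← Finset.mul_sum, hr1]
    simp
  · intro i
    have : ∀ j, q j * ((if i = j then a j else 0) + (1 - a j) * r i)
        = (if i = j then m j else 0) + (q j - m j) * r i := by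
      intro j
      rw [← hqa, ← ha]
      split_ifs <;> ring
    simp_rw [this]
    rw [Finset.sum_add_distrib, ← Finset.sum_mul, hδq, hr]
    simp
  · rw [← hδabs, ← hδq]
    refine Finset.sum_le_sum fun j _ => ?_
    rw [← hqa]
    refine mul_le_mul_of_nonneg_left ?_ (hq j)
    calc ∑ i, ((if i = j then a j else 0) + (1 - a j) * r i) * (if i = j then 0 else 1)
        ≤ ∑ i, (1 - a j) * r i := by
          refine Finset.sum_le_sum fun i _ => ?_
          have := mul_nonneg (sub_nonneg.2 (ha1 j)) (hr0 i)
          split_ifs <;> simp [this]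
      _ = 1 - a j := by rw [← Finset.mul_sum, hr1, mul_one]

/-- Gluing of the couplings into nonnegative weights on paths. The marginals are expressed through
test functions `g`. Induction on `T` prepends a new initial state, sampled by the kernel from the
old one, so that the law of the remaining path is unchanged. -/
lemma exists_path_weights {ι : Type*} [Fintype ι] [DecidableEq ι] (T : ℕ)
    (x : Fin (T + 1) → ι → ℝ) (hx0 : ∀ t i, 0 ≤ x t i) (hx1 : ∀ t, ∑ i, x t i = 1) :
    ∃ w : (Fin (T + 1) → ι) → ℝ, (∀ ω, 0 ≤ w ω) ∧
      (∀ t (g : ι → ℝ), ∑ ω, w ω * g (ω t) = ∑ i, x t i * g i) ∧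
      (∀ t : Fin T, ∑ ω, w ω * (if ω t.castSucc = ω t.succ then 0 else 1)
        ≤ 1 / 2 * ∑ i, |x t.castSucc i - x t.succ i|) := by
  induction T with
  | zero =>
    refine ⟨fun ω => x 0 (ω 0), fun ω => hx0 _ _, fun t g => ?_, fun t => t.elim0⟩
    obtain rfl : t = 0 := Fin.fin_one_eq_zero t
    exact Fintype.sum_equiv (Equiv.funUnique (Fin 1) ι) _ _ fun ω => rfl
  | succ T ih =>
    obtain ⟨w, hw0, hw, hwd⟩ := ih (fun t => x t.succ) (fun t => hx0 _) (fun t => hx1 _)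
    obtain ⟨K, hK0, hK1, hK, hKd⟩ := exists_coupling_kernel (x 0) (x 1) (hx0 _) (hx0 _)
      (hx1 _) (hx1 _)
    have hsum : ∀ F : (Fin (T + 2) → ι) → ℝ,
        ∑ ω, F ω = ∑ ω : Fin (T + 1) → ι, ∑ i, F (Fin.cons i ω) := by
      intro F
      rw [← (Fin.consEquiv fun _ => ι).sum_comp, Fintype.sum_prod_type, Finset.sum_comm]
      rfl
    -- Any statistic of the tail has the same expectation as before.
    have htail : ∀ G : (Fin (T + 1) → ι) → ℝ,
        ∑ ω : Fin (T + 1) → ι, ∑ i, w ω * K (ω 0) i * G ω = ∑ ω, w ω * G ω := by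
      intro G
      refine Finset.sum_congr rfl fun ω _ => ?_
      rw [← Finset.sum_mul, ← Finset.mul_sum, hK1, mul_one]
    -- Any statistic of the first two states is an expectation under `x 1` and the kernel.
    have hhead : ∀ G : ι → ι → ℝ,
        ∑ ω : Fin (T + 1) → ι, ∑ i, w ω * K (ω 0) i * G i (ω 0)
          = ∑ j, x 1 j * ∑ i, K j i * G i j := by
      intro G
      refine Eq.trans ?_ (hw 0 fun j => ∑ i, K j i * G i j)
      refine Finset.sum_congr rfl fun ω _ => ?_
      rw [Finset.mul_sum]
      exact Finset.sum_congr rfl fun i _ => mul_assoc _ _ _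
    refine ⟨fun ω => w (Fin.tail ω) * K (ω 1) (ω 0), fun ω => mul_nonneg (hw0 _) (hK0 _ _), ?_, ?_⟩
    · intro t g
      rw [hsum]
      refine Fin.cases ?_ (fun t => ?_) t
      · refine (hhead fun i _ => g i).trans ?_
        simp_rw [Finset.mul_sum, ← mul_assoc]
        rw [Finset.sum_comm]
        simp_rw [← Finset.sum_mul, hK]
      · exact (htail fun ω => g (ω t)).trans (hw t g)
    · intro t
      rw [hsum]
      refine Fin.cases ?_ (fun t => ?_) t
      · exact (hhead fun i j => if i = j then 0 else 1).trans_le hKd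
      · exact (htail fun ω => if ω t.castSucc = ω t.succ then 0 else 1).trans_le (hwd t)

/-- **Online rounding of distributions over heuristics.**
Let `(M, d)` be a finite metric space of diameter at most `D > 0`, and for
each time `t ∈ {0,…,T}` and heuristic `i ∈ {1,…,ℓ}` let `s t i ∈ M` be the
state of heuristic `i` at time `t`.  With `f t i = c t (s t i) + d (s (t−1) i) (s t i)`
and distributions `x 0, …, x T` over the heuristics, there exists a probability
measure on sequences `(i 0, …, i T)` whose `t`-th marginal is `x t` and whose
expected MTS cost is at most
`∑_{t=1}^T (⟨f t, x t⟩ + (D/2) · ‖x (t−1) − x t‖₁)`. -/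
theorem heuristics_fractional_rounding
    (M : Type*) [MetricSpace M] [Fintype M] [Nonempty M]
    (D : ℝ) (hD : 0 < D) (hdiam : ∀ a b : M, dist a b ≤ D)
    (ℓ T : ℕ) (hℓ : 1 ≤ ℓ) (hT : 1 ≤ T)
    (s : Fin (T + 1) → Fin ℓ → M)
    (c : Fin T → M → ℝ) (hc : ∀ t z, 0 ≤ c t z)
    (f : Fin T → Fin ℓ → ℝ)
    (hf : ∀ t i, f t i = c t (s t.succ i) + dist (s t.castSucc i) (s t.succ i))
    (x : Fin (T + 1) → Fin ℓ → ℝ)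
    (hx0 : ∀ t i, 0 ≤ x t i) (hx1 : ∀ t, ∑ i, x t i = 1) :
    ∃ μ : PMF (Fin (T + 1) → Fin ℓ),
      (∀ t (i : Fin ℓ), μ.map (fun ω => ω t) i = ENNReal.ofReal (x t i)) ∧
      (∑ ω : Fin (T + 1) → Fin ℓ, (μ ω).toReal *
          ∑ t : Fin T,
            (c t (s t.succ (ω t.succ)) +
              dist (s t.castSucc (ω t.castSucc)) (s t.succ (ω t.succ))))
        ≤ ∑ t : Fin T,
            ((∑ i, f t i * x t.succ i) +
              (D / 2) * ∑ i, |x t.castSucc i - x t.succ i|) := by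
  obtain ⟨w, hw0, hw, hwd⟩ := exists_path_weights T x hx0 hx1
  have hw1 : ∑ ω, w ω = 1 := by simpa [hx1] using hw 0 fun _ => 1
  refine ⟨PMF.ofFintype (fun ω => ENNReal.ofReal (w ω)) ?_, ?_, ?_⟩
  · rw [← ENNReal.ofReal_sum_of_nonneg fun ω _ => hw0 ω, hw1, ENNReal.ofReal_one]
  · intro t i
    have h := hw t fun j => if i = j then 1 else 0
    simp only [mul_ite, mul_one, mul_zero, Finset.sum_ite_eq, Finset.mem_univ, if_true] at h
    simp only [PMF.map_apply, tsum_fintype, PMF.ofFintype_apply]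
    rw [← h, ENNReal.ofReal_sum_of_nonneg]
    · refine Finset.sum_congr rfl fun ω _ => ?_
      split_ifs <;> simp
    · intro ω _
      split_ifs
      exacts [hw0 ω, le_rfl]
  · simp only [PMF.ofFintype_apply, ENNReal.toReal_ofReal (hw0 _), Finset.mul_sum (ι := Fin T)]
    rw [Finset.sum_comm]
    refine Finset.sum_le_sum fun t _ => ?_
    -- Detour through the previous state of the new heuristic; switching costs at most `D`.
    have hstep : ∀ ω : Fin (T + 1) → Fin ℓ,
        c t (s t.succ (ω t.succ)) + dist (s t.castSucc (ω t.castSucc)) (s t.succ (ω t.succ))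
          ≤ f t (ω t.succ) + D * (if ω t.castSucc = ω t.succ then 0 else 1) := by
      intro ω
      rw [hf]
      split_ifs with h
      · rw [h]; simp
      · have h1 := dist_triangle (s t.castSucc (ω t.castSucc)) (s t.castSucc (ω t.succ))
          (s t.succ (ω t.succ))
        have h2 := hdiam (s t.castSucc (ω t.castSucc)) (s t.castSucc (ω t.succ))
        linarith
    calc _ ≤ ∑ ω, w ω * (f t (ω t.succ) + D * (if ω t.castSucc = ω t.succ then 0 else 1)) :=
          Finset.sum_le_sum fun ω _ => mul_le_mul_of_nonneg_left (hstep ω) (hw0 ω)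
      _ = ∑ i, x t.succ i * f t i
          + D * ∑ ω, w ω * (if ω t.castSucc = ω t.succ then 0 else 1) := by
          rw [← hw t.succ (f t), Finset.mul_sum, ← Finset.sum_add_distrib]
          exact Finset.sum_congr rfl fun ω _ => by ring
      _ ≤ ∑ i, x t.succ i * f t i + D * (1 / 2 * ∑ i, |x t.castSucc i - x t.succ i|) := by
          gcongr
          exact hwd t
      _ = _ := by
          simp_rw [mul_comm (x t.succ _)]
          ring
end

section
/- For every t ∈ {1,…,T}, letting τ := max{t' ∈ K : t' ≤ t} denote the last known step before (or equal to) t, the proxy cost of the greedy algorithm satisfies C_t ≤ C'_t + 4·∑_{t'=τ+1}^{t} C'_{t'}. In particular, the cost of the greedy steps taken while the followed heuristic's state is unknown is bounded by a constant multiple of the heuristic's own cost since the last known step. -/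
/-!
At an unknown step `t` the anchor `b t` is still `y τ`. The triangle inequality through `b t`, together
with `2 d(b, s) + c(s) ≤ 2 (d(b, s) + c(s)) ≤ 2 (d(b, y t) + c(y t))` from greediness, gives
`C t ≤ C' t + c t (y t) + 4 d(y τ, y t)`. The distance `d(y τ, y t)` telescopes along the heuristic's
path, so `d(y τ, y t) + c t (y t)` is at most the sum of `C'` over `τ + 1, …, t`.
At a known step `τ = t` and the sum is empty.
-/

/-- **Proxy-cost bound for the greedy steps (Proposition from Appendix A).**
Let `(M, d)` be a finite metric space, `y t` the state of the followed heuristic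
at time `t`, `c t` nonnegative cost functions, and `K ⊆ {0,…,T}` with `0 ∈ K`
the set of known steps.  Define `s` and `b` by: `s 0 = b 0 = y 0`; for `t ∈ K`,
`s t = y t` and `b t = y t`; for `t ∉ K`, `b t = b (t−1)` and `s t` is a greedy
minimizer of `d (b t) z + c t z`.  With the heuristic cost
`C' t = c t (y t) + d (y (t−1)) (y t)` and the proxy cost
`C t = C' t` for `t ∈ K`, `C t = d (y (t−1)) (s t) + c t (s t) + d (s t) (b t) + d (b t) (y t)`
for `t ∉ K`, it holds for every `t ∈ {1,…,T}` that, letting `τ` be the last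
known step `≤ t`, `C t ≤ C' t + 4 · ∑_{t'=τ+1}^t C' t'`. -/
theorem greedy_proxy_cost_bound
    (M : Type*) [MetricSpace M] [Fintype M] [Nonempty M]
    (T : ℕ) (hT : 1 ≤ T)
    (y : ℕ → M)
    (c : ℕ → M → ℝ) (hc : ∀ t z, 0 ≤ c t z)
    (K : Finset ℕ) (hK0 : 0 ∈ K) (hKT : ∀ t ∈ K, t ≤ T)
    (s b : ℕ → M)
    (hs0 : s 0 = y 0) (hb0 : b 0 = y 0)
    (hsK : ∀ t ∈ K, s t = y t) (hbK : ∀ t ∈ K, b t = y t)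
    (hbn : ∀ t, 1 ≤ t → t ≤ T → t ∉ K → b t = b (t - 1))
    (hsn : ∀ t, 1 ≤ t → t ≤ T → t ∉ K →
      ∀ z : M, dist (b t) (s t) + c t (s t) ≤ dist (b t) z + c t z)
    (C' C : ℕ → ℝ)
    (hC' : ∀ t, 1 ≤ t → t ≤ T → C' t = c t (y t) + dist (y (t - 1)) (y t))
    (hCin : ∀ t, 1 ≤ t → t ≤ T → t ∈ K → C t = C' t)
    (hCout : ∀ t, 1 ≤ t → t ≤ T → t ∉ K →
      C t = dist (y (t - 1)) (s t) + c t (s t) + dist (s t) (b t) + dist (b t) (y t)) :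
    ∀ t, 1 ≤ t → t ≤ T → ∀ τ : ℕ,
      (τ ∈ K ∧ τ ≤ t ∧ ∀ t' ∈ K, t' ≤ t → t' ≤ τ) →
      C t ≤ C' t + 4 * ∑ t' ∈ Finset.Icc (τ + 1) t, C' t' := by
  rintro t ht1 htT τ ⟨hτK, hτt, hτmax⟩
  by_cases htK : t ∈ K
  · obtain rfl : τ = t := le_antisymm hτt (hτmax t htK le_rfl)
    simp [hCin τ ht1 htT htK]
  · have hlt : τ < t := lt_of_le_of_ne hτt (fun h => htK (h ▸ hτK))
    have hb : ∀ u, τ ≤ u → u ≤ t → b u = y τ := by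
      intro u hu
      induction u, hu using Nat.le_induction with
      | base => exact fun _ => hbK τ hτK
      | succ n hn ih =>
        intro hnt
        have hnK : n + 1 ∉ K := fun h => by
          have := hτmax _ h hnt
          omega
        rw [hbn (n + 1) (by omega) (by omega) hnK]
        exact ih (by omega)
    have hd : ∀ u, τ ≤ u → u ≤ t →
        dist (y τ) (y u) ≤ ∑ t' ∈ Finset.Icc (τ + 1) u, C' t' := by
      intro u hu
      induction u, hu using Nat.le_induction with
      | base => simp
      | succ n hn ih =>
        intro hnt
        have h1 := ih (by omega)
        have h2 := hC' (n + 1) (by omega) (by omega)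
        rw [Nat.add_sub_cancel] at h2
        rw [Finset.sum_Icc_succ_top (by omega)]
        linarith [dist_triangle (y τ) (y n) (y (n + 1)), hc (n + 1) (y (n + 1))]
    obtain ⟨n, rfl⟩ : ∃ n, t = n + 1 := ⟨t - 1, by omega⟩
    have hdn := hd n (by omega) (by omega)
    have hC1 := hC' (n + 1) ht1 htT
    have hCo := hCout (n + 1) ht1 htT htK
    have hs := hsn (n + 1) ht1 htT htK (y (n + 1))
    rw [hb (n + 1) hτt le_rfl] at hCo hs
    rw [Nat.add_sub_cancel] at hC1 hCo
    rw [Finset.sum_Icc_succ_top (by omega), hCo]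
    have e1 := dist_triangle (y n) (y τ) (s (n + 1))
    have e2 := dist_triangle (y n) (y (n + 1)) (y τ)
    have e3 := dist_triangle (y τ) (y n) (y (n + 1))
    rw [dist_comm (s (n + 1)) (y τ)]
    rw [dist_comm (y (n + 1)) (y τ)] at e2
    linarith [hc (n + 1) (y (n + 1)), hc (n + 1) (s (n + 1))]
end
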